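/- Let M be an n×n complex matrix with n pairwise distinct eigenvalues, and let S* be an invertible matrix and D* a diagonal matrix with M = S* D* S*⁻¹. Define the diagonal matrix K by K_{jj} = ∑_{k=1}^n |(S*⁻¹)_{jk}|. Then for every invertible matrix S and diagonal matrix D with M = S D S⁻¹, one has ‖S‖∞ · ‖S⁻¹‖∞ ≥ ‖S* K‖∞. (Lower-bound direction of the minimal-condition-number lemma.) -/

import Mathlib

open Matrix

/-- The matrix norm induced by the vector `∞`-norm: the maximum absolute row sum. -/
noncomputable def mNorm {ι κ : Type*} [Fintype ι] [Fintype κ] (M : Matrix ι κ ℂ) : ℝ :=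
  ⨆ i, ∑ j, ‖M i j‖

lemma mNorm_row_le {n : ℕ} (A : Matrix (Fin n) (Fin n) ℂ) (i : Fin n) :
    ∑ j, ‖A i j‖ ≤ mNorm A :=
  le_ciSup (f := fun i => ∑ j, ‖A i j‖) (Set.finite_range _).bddAbove i

lemma mNorm_nonneg' {n : ℕ} (A : Matrix (Fin n) (Fin n) ℂ) : 0 ≤ mNorm A :=
  Real.iSup_nonneg fun _ => Finset.sum_nonneg fun _ _ => norm_nonneg _

/-- Lemma 1, lower-bound direction: if `M = S* D* S*⁻¹` has `n` pairwise distinct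
eigenvalues (the diagonal entries of `D*`), and `K` is the diagonal matrix with
`K_jj = ∑_k |(S*⁻¹)_jk|`, then every diagonalizing matrix `S` of `M` satisfies
`‖S‖_∞ ‖S⁻¹‖_∞ ≥ ‖S* K‖_∞`. -/
theorem min_condition_number_lower_bound
    {n : ℕ} (M Sstar Dstar : Matrix (Fin n) (Fin n) ℂ)
    (hSstar : IsUnit Sstar) (hDstar : Dstar.IsDiag)
    (hM : M = Sstar * Dstar * Sstar⁻¹)
    (hdist : Function.Injective fun i => Dstar i i)
    (K : Matrix (Fin n) (Fin n) ℂ)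
    (hK : K = Matrix.diagonal fun j => ((∑ k, ‖Sstar⁻¹ j k‖ : ℝ) : ℂ))
    (S D : Matrix (Fin n) (Fin n) ℂ) (hS : IsUnit S) (hD : D.IsDiag)
    (hM' : M = S * D * S⁻¹) :
    mNorm (Sstar * K) ≤ mNorm S * mNorm S⁻¹ := by
  have hu := (Matrix.isUnit_iff_isUnit_det _).1 hSstar
  have hv := (Matrix.isUnit_iff_isUnit_det _).1 hS
  obtain ⟨Q, hQ⟩ : ∃ Q, Q = S⁻¹ * Sstar := ⟨_, rfl⟩
  obtain ⟨P, hP⟩ : ∃ P, P = Sstar⁻¹ * S := ⟨_, rfl⟩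
  have hQP : Q * P = 1 := by
    rw [hQ, hP, Matrix.mul_assoc, Matrix.mul_nonsing_inv_cancel_left _ _ hu,
      Matrix.nonsing_inv_mul _ hv]
  have hSQ : Sstar = S * Q := by
    rw [hQ, Matrix.mul_nonsing_inv_cancel_left _ _ hv]
  have hPS : Sstar⁻¹ = P * S⁻¹ := by
    rw [hP, Matrix.mul_nonsing_inv_cancel_right _ _ hv]
  have hDQ : D * Q = Q * Dstar := by
    have h1 : S⁻¹ * M * Sstar = D * Q := by
      rw [hM', hQ]
      simp only [Matrix.mul_assoc]
      rw [Matrix.nonsing_inv_mul_cancel_left _ _ hv]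
    have h2 : S⁻¹ * M * Sstar = Q * Dstar := by
      rw [hM, hQ]
      simp only [Matrix.mul_assoc]
      rw [Matrix.nonsing_inv_mul _ hu, Matrix.mul_one]
    rw [← h1, h2]
  have hent : ∀ l j, Q l j ≠ 0 → Dstar j j = D l l := by
    intro l j h
    have h3 := congrFun (congrFun hDQ l) j
    rw [← hD.diagonal_diag, ← hDstar.diagonal_diag, Matrix.diagonal_mul,
      Matrix.mul_diagonal, mul_comm] at h3
    exact (mul_left_cancel₀ h h3).symm
  have key : ∀ l m, ∑ j, ‖Q l j‖ * ‖P j m‖ = if l = m then 1 else 0 := by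
    intro l m
    have h4 : ∑ j, ‖Q l j‖ * ‖P j m‖ = ‖(Q * P) l m‖ := by
      rw [Matrix.mul_apply]
      by_cases hz : ∃ j, Q l j ≠ 0
      · obtain ⟨j0, hj0⟩ := hz
        have hother : ∀ j, j ≠ j0 → Q l j = 0 := by
          intro j hj
          by_contra hne
          exact hj (hdist ((hent l j hne).trans (hent l j0 hj0).symm))
        rw [Finset.sum_eq_single j0, Finset.sum_eq_single j0, norm_mul]
        · intro j _ hj; simp [hother j hj]
        · simp
        · intro j _ hj; simp [hother j hj]
        · simp
      · push Not at hz
        simp [hz]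
    rw [h4, hQP, Matrix.one_apply]
    split_ifs <;> simp
  refine Real.iSup_le (fun i => ?_) (mul_nonneg (mNorm_nonneg' _) (mNorm_nonneg' _))
  have hk : ∀ j, ∑ k, ‖Sstar⁻¹ j k‖ ≤ ∑ m, ‖P j m‖ * mNorm S⁻¹ := by
    intro j
    calc ∑ k, ‖Sstar⁻¹ j k‖ ≤ ∑ k, ∑ m, ‖P j m‖ * ‖S⁻¹ m k‖ := by
          refine Finset.sum_le_sum fun k _ => ?_
          rw [hPS, Matrix.mul_apply]
          refine (norm_sum_le _ _).trans_eq ?_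
          simp only [norm_mul]
      _ = ∑ m, ‖P j m‖ * ∑ k, ‖S⁻¹ m k‖ := by
          rw [Finset.sum_comm]
          simp only [Finset.mul_sum]
      _ ≤ _ := Finset.sum_le_sum fun m _ =>
          mul_le_mul_of_nonneg_left (mNorm_row_le _ _) (norm_nonneg _)
  have hs : ∀ j, ‖Sstar i j‖ ≤ ∑ l, ‖S i l‖ * ‖Q l j‖ := by
    intro j
    rw [hSQ, Matrix.mul_apply]
    refine (norm_sum_le _ _).trans_eq ?_
    simp only [norm_mul]
  calc ∑ j, ‖(Sstar * K) i j‖ = ∑ j, ‖Sstar i j‖ * ∑ k, ‖Sstar⁻¹ j k‖ := by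
        refine Finset.sum_congr rfl fun j _ => ?_
        rw [hK, Matrix.mul_diagonal, norm_mul, Complex.norm_real, Real.norm_of_nonneg]
        exact Finset.sum_nonneg fun _ _ => norm_nonneg _
    _ ≤ ∑ j, (∑ l, ‖S i l‖ * ‖Q l j‖) * ∑ m, ‖P j m‖ * mNorm S⁻¹ :=
        Finset.sum_le_sum fun j _ => mul_le_mul (hs j) (hk j)
          (Finset.sum_nonneg fun _ _ => norm_nonneg _)
          (Finset.sum_nonneg fun _ _ => by positivity)
    _ = ∑ l, ∑ m, ∑ j, ‖S i l‖ * mNorm S⁻¹ * (‖Q l j‖ * ‖P j m‖) := by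
        simp only [Finset.sum_mul_sum]
        rw [Finset.sum_comm]
        refine Finset.sum_congr rfl fun l _ => ?_
        rw [Finset.sum_comm]
        refine Finset.sum_congr rfl fun m _ => Finset.sum_congr rfl fun j _ => ?_
        ring
    _ = (∑ l, ‖S i l‖) * mNorm S⁻¹ := by
        simp only [← Finset.mul_sum, key, Finset.sum_ite_eq, Finset.mem_univ, if_true,
          mul_one, Finset.sum_mul]
    _ ≤ _ := mul_le_mul_of_nonneg_right (mNorm_row_le _ _) (mNorm_nonneg' _)
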